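/- Let $A$ be an alphabet. Positions of a word $u\in A^*$ are $1,\dots,|u|$, and $i$ is an $a$-position of $u$ if $u[i]=a$. A ranker is a nonempty word over the alphabet $\{\mathsf X_a,\mathsf Y_a : a\in A\}$. For $0\le q\le |u|+1$, $\mathsf X_a(u,q)$ is the least $a$-position of $u$ strictly greater than $q$, and $\mathsf Y_a(u,q)$ is the greatest $a$-position of $u$ strictly less than $q$ (undefined if there is none). Rankers are evaluated from left to right: $(r'\mathsf Z)(u,q)=\mathsf Z(u,r'(u,q))$; and $r(u)=r(u,0)$ if $r$ starts with an $\mathsf X$-letter, $r(u)=r(u,|u|+1)$ if $r$ starts with a $\mathsf Y$-letter; $r$ is defined on $u$ if $r(u)$ exists. The depth of $r$ is its length; a block of $r$ is a maximal factor consisting only of $\mathsf X$-letters or only of $\mathsf Y$-letters. $R^{\mathsf X}_{m,n}$ (resp. $R^{\mathsf Y}_{m,n}$) is the set of rankers with exactly $m$ blocks and depth $n$ whose first block is an $\mathsf X$-block (resp. a $\mathsf Y$-block); $\underline R^{\mathsf X}_{m,n}=\bigcup_{m'\le m,\,n'\le n}R^{\mathsf X}_{m',n'}\cup\bigcup_{m'<m,\,n'<n}R^{\mathsf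 Y}_{m',n'}$, and $\underline R^{\mathsf Y}_{m,n}$ is defined dually. A ranker $r=\mathsf Z_1\cdots \mathsf Z_k$ is condensed on $u$ if it is defined on $u$ and there is a strictly decreasing chain of open integer intervals $(0;|u|+1)=(i_0;j_0)\supset(i_1;j_1)\supset\cdots\supset(i_{k-1};j_{k-1})\ni r(u)$ such that for all $1\le h\le k-1$ the pair $(i_h,j_h)$ equals $(\mathsf X_c(u,i_{h-1}),j_{h-1})$ if $\mathsf Z_h\mathsf Z_{h+1}=\mathsf X_c\mathsf X_d$; $(i_{h-1},\mathsf Y_c(u,j_{h-1}))$ if $\mathsf Z_h\mathsf Z_{h+1}=\mathsf Y_c\mathsf Y_d$; $(i_{h-1},\mathsf X_c(u,i_{h-1}))$ if $\mathsf Z_h\mathsf Z_{h+1}=\mathsf X_c\mathsf Y_d$; and $(\mathsf Y_c(u,j_{h-1}),j_{h-1})$ if $\mathsf Z_h\mathsf Z_{h+1}=\mathsf Y_c\mathsf X_d$. Let $\mathsf Z\in\{\mathsf X,\mathsf Y\}$, let $r\in\underline R^{\mathsf Z}_{m,n}$ be defined but not condensed on a word $u$, and let $s$ be the maximal prefix of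 $r$ that is condensed on $u$. Then $s\ne r$, and there exist $\ell\ge 1$, letters $a,b,b_1,\dots,b_{\ell-1}$, a nonempty ranker $s_0\in\underline R^{\mathsf Z}_{m-1,n-\ell}$ and a (possibly empty) word $t$ over the alphabet of ranker letters such that one of the following holds: (i) $r=s\mathsf X_bt$, $s=s_0\mathsf Y_a\mathsf X_{b_1}\cdots\mathsf X_{b_{\ell-1}}$, and $s_0\mathsf Y_a(u)\le s(u)<s_0(u)\le s\mathsf X_b(u)$; moreover $s\mathsf X_b(u)=s_0(u)$ if the last letter of $s_0$ lies in $\{\mathsf X_b,\mathsf Y_b\}$, and $s\mathsf X_b(u)=s_0\mathsf X_b(u)$ otherwise; (ii) $r=s\mathsf Y_bt$, $s=s_0\mathsf X_a\mathsf Y_{b_1}\cdots\mathsf Y_{b_{\ell-1}}$, and $s_0\mathsf X_a(u)\ge s(u)>s_0(u)\ge s\mathsf Y_b(u)$; moreover $s\mathsf Y_b(u)=s_0(u)$ if the last letter of $s_0$ lies in $\{\mathsf X_b,\mathsf Y_b\}$, and $s\mathsf Y_b(u)=s_0\mathsf Y_b(u)$ otherwise. -/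

import Mathlib

namespace Rankers

/-- The two directions: `X` is to the right (future), `Y` is to the left (past). -/
inductive Dir where
  | X : Dir
  | Y : Dir

/-- The opposite direction. -/
def Dir.opp : Dir → Dir
  | .X => .Y
  | .Y => .X

/-- Ranker letters: `X a` (next `a` to the right) and `Y a` (next `a` to the left). -/
inductive RLetter (A : Type*) where
  | X : A → RLetter A
  | Y : A → RLetter A

/-- The direction of a ranker letter. -/
def RLetter.dir {A : Type*} : RLetter A → Dir
  | .X _ => .X
  | .Y _ => .Y

/-- `X_a(u,q)`: the least `a`-position of `u` strictly greater than `q`, `none` if there is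
none. Positions are `1, …, |u|`, and position `i` carries the letter `u[i-1]`. -/
def nextOcc {A : Type*} [DecidableEq A] (u : List A) (a : A) (q : ℕ) : Option ℕ :=
  (List.range' 1 u.length).find? (fun i => decide (q < i ∧ u[i - 1]? = some a))

/-- `Y_a(u,q)`: the greatest `a`-position of `u` strictly less than `q`, `none` if there is
none. -/
def prevOcc {A : Type*} [DecidableEq A] (u : List A) (a : A) (q : ℕ) : Option ℕ :=
  (List.range' 1 u.length).reverse.find? (fun i => decide (i < q ∧ u[i - 1]? = some a))

/-- One evaluation step `Z(u,q)`. -/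
def stepR {A : Type*} [DecidableEq A] (u : List A) : RLetter A → ℕ → Option ℕ
  | .X a, q => nextOcc u a q
  | .Y a, q => prevOcc u a q

/-- Evaluation `r(u,q)`, reading the letters from left to right. -/
def evalFrom {A : Type*} [DecidableEq A] (u : List A) : List (RLetter A) → ℕ → Option ℕ
  | [], q => some q
  | z :: r, q => (stepR u z q).bind (evalFrom u r)

/-- Starting position: `0` for an `X`-letter, `|u|+1` for a `Y`-letter. -/
def startPos {A : Type*} (u : List A) : RLetter A → ℕ
  | .X _ => 0
  | .Y _ => u.length + 1

/-- The position `r(u)`, `none` if undefined. Rankers are nonempty words, so the empty word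
gets the value `none`. -/
def evalR {A : Type*} [DecidableEq A] (u : List A) : List (RLetter A) → Option ℕ
  | [] => none
  | z :: t => evalFrom u (z :: t) (startPos u z)

/-- `r` is defined on `u`. -/
def Defined {A : Type*} [DecidableEq A] (u : List A) (r : List (RLetter A)) : Prop :=
  ∃ p, evalR u r = some p

/-- The number of blocks: a new block starts at each change of direction. -/
def numBlocks {A : Type*} : List (RLetter A) → ℕ
  | [] => 0
  | [_] => 1
  | .X _ :: .X b :: t => numBlocks (.X b :: t)
  | .Y _ :: .Y b :: t => numBlocks (.Y b :: t)
  | .X _ :: .Y b :: t => numBlocks (.Y b :: t) + 1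
  | .Y _ :: .X b :: t => numBlocks (.X b :: t) + 1

/-- `R^Z_{m,n}`: (nonempty) rankers with exactly `m` blocks and depth `n` whose first block is
a `Z`-block. -/
def R {A : Type*} (Z : Dir) (m n : ℕ) : Set (List (RLetter A)) :=
  {r | numBlocks r = m ∧ r.length = n ∧ ∃ c t, r = c :: t ∧ c.dir = Z}

/-- `uR^Z_{m,n}`: the union of the `R^Z_{m',n'}` with `m' ≤ m`, `n' ≤ n` and of the
`R^{Z'}_{m',n'}` with `m' < m`, `n' < n`, where `Z'` is the direction opposite to `Z`. -/
def uR {A : Type*} (Z : Dir) (m n : ℕ) : Set (List (RLetter A)) :=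
  {r | (∃ m' n', m' ≤ m ∧ n' ≤ n ∧ r ∈ R Z m' n') ∨
       (∃ m' n', m' < m ∧ n' < n ∧ r ∈ R Z.opp m' n')}

/-- `r = Z_1 ⋯ Z_n` is condensed on `u`: it is defined on `u` and there is a (strictly
decreasing) chain of open integer intervals
`(0;|u|+1) = (i_0;j_0) ⊃ (i_1;j_1) ⊃ ⋯ ⊃ (i_{n-1};j_{n-1}) ∋ r(u)` satisfying the four update
rules. With lists indexed from `0`, the letters `Z_{k+1}`, `Z_{k+2}` are `r[k]`, `r[k+1]`, and
they govern the step from `(i_k;j_k)` to `(i_{k+1};j_{k+1})`. -/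
def Condensed {A : Type*} [DecidableEq A] (u : List A) (r : List (RLetter A)) : Prop :=
  ∃ (p : ℕ) (i j : ℕ → ℕ),
    evalR u r = some p ∧
    i 0 = 0 ∧ j 0 = u.length + 1 ∧
    (∀ k, k + 1 < r.length →
      Set.Ioo (i (k + 1)) (j (k + 1)) ⊂ Set.Ioo (i k) (j k)) ∧
    p ∈ Set.Ioo (i (r.length - 1)) (j (r.length - 1)) ∧
    (∀ k a b, r[k]? = some (RLetter.X a) → r[k + 1]? = some (RLetter.X b) →
      nextOcc u a (i k) = some (i (k + 1)) ∧ j (k + 1) = j k) ∧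
    (∀ k a b, r[k]? = some (RLetter.Y a) → r[k + 1]? = some (RLetter.Y b) →
      i (k + 1) = i k ∧ prevOcc u a (j k) = some (j (k + 1))) ∧
    (∀ k a b, r[k]? = some (RLetter.X a) → r[k + 1]? = some (RLetter.Y b) →
      i (k + 1) = i k ∧ nextOcc u a (i k) = some (j (k + 1))) ∧
    (∀ k a b, r[k]? = some (RLetter.Y a) → r[k + 1]? = some (RLetter.X b) →
      prevOcc u a (j k) = some (i (k + 1)) ∧ j (k + 1) = j k)

/-- `s` is the maximal (longest) prefix of `r` that is condensed on `u`. -/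
def IsMaxCondensedPrefix {A : Type*} [DecidableEq A] (u : List A)
    (r s : List (RLetter A)) : Prop :=
  s <+: r ∧ Condensed u s ∧
    ∀ s' : List (RLetter A), s' <+: r → Condensed u s' → s'.length ≤ s.length

/-- The last letter of the ranker `s` is `X_b` or `Y_b`. -/
def EndsWith {A : Type*} (s : List (RLetter A)) (b : A) : Prop :=
  s.getLast? = some (RLetter.X b) ∨ s.getLast? = some (RLetter.Y b)

end Rankers

open Rankers

namespace Rankers

variable {A : Type*} [DecidableEq A] {u : List A}

theorem nextOcc_eq_some {a : A} {q p : ℕ} :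
    nextOcc u a q = some p ↔ q < p ∧ p ≤ u.length ∧ u[p - 1]? = some a ∧
      ∀ x, q < x → x < p → u[x - 1]? ≠ some a := by
  unfold nextOcc
  rw [List.find?_range'_eq_some]
  simp only [decide_eq_true_eq, List.mem_range'_1, Bool.not_eq_true', decide_eq_false_iff_not]
  grind

theorem prevOcc_eq_some {a : A} {q p : ℕ} :
    prevOcc u a q = some p ↔ 0 < p ∧ p < q ∧ u[p - 1]? = some a ∧
      ∀ x, p < x → x < q → u[x - 1]? ≠ some a := by
  unfold prevOcc
  rw [List.find?_eq_some_iff_getElem]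
  simp only [decide_eq_true_eq, List.length_reverse, List.length_range', List.getElem_reverse,
    List.getElem_range', Bool.not_eq_true', decide_eq_false_iff_not]
  constructor
  · rintro ⟨⟨h1, h2⟩, k, hk, rfl, h⟩
    refine ⟨by omega, h1, h2, fun x hx hxq hxa => ?_⟩
    have hlt : x - 1 < u.length := by grind
    exact h (u.length - x) (by omega) ⟨by omega, by
      rwa [show 1 + 1 * (u.length - 1 - (u.length - x)) - 1 = x - 1 by omega]⟩
  · rintro ⟨h0, h1, h2, h⟩
    have hlt : p - 1 < u.length := by grind
    refine ⟨⟨h1, h2⟩, u.length - p, by omega, by omega, fun k hk hka => ?_⟩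
    exact h _ (by omega) hka.1 hka.2

theorem evalFrom_append (r t : List (RLetter A)) (q : ℕ) :
    evalFrom u (r ++ t) q = (evalFrom u r q).bind (evalFrom u t) := by
  induction r generalizing q with
  | nil => rfl
  | cons z r ih =>
    simp only [List.cons_append, evalFrom, Option.bind_assoc]
    congr 1
    funext x
    exact ih x

theorem evalR_append {r : List (RLetter A)} (hr : r ≠ []) (t : List (RLetter A)) :
    evalR u (r ++ t) = (evalR u r).bind (evalFrom u t) := by
  cases r with
  | nil => exact absurd rfl hr
  | cons z r => exact evalFrom_append (z :: r) t _

theorem evalR_concat {r : List (RLetter A)} (hr : r ≠ []) (z : RLetter A) :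
    evalR u (r ++ [z]) = (evalR u r).bind (stepR u z) := by
  rw [evalR_append hr]
  simp [evalFrom]

theorem evalR_singleton (z : RLetter A) : evalR u [z] = stepR u z (startPos u z) := by
  simp [evalR, evalFrom]

theorem evalR_prefix_defined {r s : List (RLetter A)} {p : ℕ} (hs : s ≠ []) (hsr : s <+: r)
    (hr : evalR u r = some p) : ∃ q, evalR u s = some q := by
  obtain ⟨t, rfl⟩ := hsr
  rw [evalR_append hs] at hr
  obtain ⟨q, hq, -⟩ := Option.bind_eq_some_iff.1 hr
  exact ⟨q, hq⟩

/-- `CondensedAt u s i j p` says that `s` is condensed on `u`, with value `s(u) = p` and with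
`(i;j)` the last interval of its chain. -/
inductive CondensedAt (u : List A) : List (RLetter A) → ℕ → ℕ → ℕ → Prop
  | startX {a : A} {p : ℕ} : nextOcc u a 0 = some p → CondensedAt u [.X a] 0 (u.length + 1) p
  | startY {a : A} {p : ℕ} : prevOcc u a (u.length + 1) = some p →
      CondensedAt u [.Y a] 0 (u.length + 1) p
  | stepX {s : List (RLetter A)} {i j p q : ℕ} {a : A} : CondensedAt u s i j p →
      nextOcc u a p = some q → q < j → CondensedAt u (s ++ [.X a]) p j q
  | stepY {s : List (RLetter A)} {i j p q : ℕ} {a : A} : CondensedAt u s i j p →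
      prevOcc u a p = some q → i < q → CondensedAt u (s ++ [.Y a]) i p q

namespace CondensedAt

variable {s : List (RLetter A)} {i j p : ℕ}

theorem ne_nil (h : CondensedAt u s i j p) : s ≠ [] := by
  cases h <;> simp

theorem evalR_eq (h : CondensedAt u s i j p) : evalR u s = some p := by
  induction h with
  | startX h => simpa [evalR_singleton, stepR, startPos] using h
  | startY h => simpa [evalR_singleton, stepR, startPos] using h
  | stepX hs h _ ih => simpa [evalR_concat hs.ne_nil, ih, stepR] using h
  | stepY hs h _ ih => simpa [evalR_concat hs.ne_nil, ih, stepR] using h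

theorem mem_Ioo (h : CondensedAt u s i j p) : p ∈ Set.Ioo i j := by
  cases h with
  | startX h => have := nextOcc_eq_some.1 h; exact ⟨by omega, by omega⟩
  | startY h => have := prevOcc_eq_some.1 h; exact ⟨by omega, by omega⟩
  | stepX hs h hq => exact ⟨(nextOcc_eq_some.1 h).1, hq⟩
  | stepY hs h hq => exact ⟨hq, (prevOcc_eq_some.1 h).2.1⟩

theorem nextOcc_of_last {a : A} (h : CondensedAt u s i j p) (ha : s.getLast? = some (.X a)) :
    nextOcc u a i = some p := by
  cases h <;> simp_all

theorem prevOcc_of_last {a : A} (h : CondensedAt u s i j p) (ha : s.getLast? = some (.Y a)) :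
    prevOcc u a j = some p := by
  cases h <;> simp_all

theorem condensed (h : CondensedAt u s i j p) : Condensed u s := by
  suffices H : ∃ I J : ℕ → ℕ, I (s.length - 1) = i ∧ J (s.length - 1) = j ∧
      I 0 = 0 ∧ J 0 = u.length + 1 ∧
      (∀ k, k + 1 < s.length → Set.Ioo (I (k + 1)) (J (k + 1)) ⊂ Set.Ioo (I k) (J k)) ∧
      (∀ k a b, s[k]? = some (RLetter.X a) → s[k + 1]? = some (RLetter.X b) →
        nextOcc u a (I k) = some (I (k + 1)) ∧ J (k + 1) = J k) ∧
      (∀ k a b, s[k]? = some (RLetter.Y a) → s[k + 1]? = some (RLetter.Y b) →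
        I (k + 1) = I k ∧ prevOcc u a (J k) = some (J (k + 1))) ∧
      (∀ k a b, s[k]? = some (RLetter.X a) → s[k + 1]? = some (RLetter.Y b) →
        I (k + 1) = I k ∧ nextOcc u a (I k) = some (J (k + 1))) ∧
      (∀ k a b, s[k]? = some (RLetter.Y a) → s[k + 1]? = some (RLetter.X b) →
        prevOcc u a (J k) = some (I (k + 1)) ∧ J (k + 1) = J k) by
    obtain ⟨I, J, rfl, rfl, h0, h1, h2, h3⟩ := H
    exact ⟨p, I, J, h.evalR_eq, h0, h1, h2, h.mem_Ioo, h3⟩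
  induction h with
  | startX h => exact ⟨fun _ => 0, fun _ => u.length + 1, by simp⟩
  | startY h => exact ⟨fun _ => 0, fun _ => u.length + 1, by simp⟩
  | @stepX s i j p q a hs h hq ih =>
    obtain ⟨I, J, hI, hJ, h0, h1, h2, h3, h4, h5, h6⟩ := ih
    have hl := List.length_pos_iff.2 hs.ne_nil
    have hX := fun b => hs.nextOcc_of_last (a := b)
    have hY := fun b => hs.prevOcc_of_last (a := b)
    have hm := hs.mem_Ioo
    simp only [List.getLast?_eq_getElem?] at hX hY
    refine ⟨fun k => if k < s.length then I k else p, fun k => if k < s.length then J k else j,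
      by simp, by simp, by simp [hl, h0], by simp [hl, h1], ?_, ?_, ?_, ?_, ?_⟩
    · intro k hk
      by_cases hk' : k + 1 < s.length
      · simpa [hk', (by omega : k < s.length)] using h2 k hk'
      · obtain rfl : k = s.length - 1 := by grind
        simp only [hk', if_false, (by omega : s.length - 1 < s.length), if_true, hI, hJ]
        exact ⟨Set.Ioo_subset_Ioo_left hm.1.le, fun hc => lt_irrefl p (hc hm).1⟩
    all_goals
      intro k b c hb hc
      by_cases hk' : k + 1 < s.length
      · grind
      · by_cases hk2 : k + 1 = s.length
        · obtain rfl : k = s.length - 1 := by omega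
          grind
        · grind
  | @stepY s i j p q a hs h hq ih =>
    obtain ⟨I, J, hI, hJ, h0, h1, h2, h3, h4, h5, h6⟩ := ih
    have hl := List.length_pos_iff.2 hs.ne_nil
    have hX := fun b => hs.nextOcc_of_last (a := b)
    have hY := fun b => hs.prevOcc_of_last (a := b)
    have hm := hs.mem_Ioo
    simp only [List.getLast?_eq_getElem?] at hX hY
    refine ⟨fun k => if k < s.length then I k else i, fun k => if k < s.length then J k else p,
      by simp, by simp, by simp [hl, h0], by simp [hl, h1], ?_, ?_, ?_, ?_, ?_⟩
    · intro k hk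
      by_cases hk' : k + 1 < s.length
      · simpa [hk', (by omega : k < s.length)] using h2 k hk'
      · obtain rfl : k = s.length - 1 := by grind
        simp only [hk', if_false, (by omega : s.length - 1 < s.length), if_true, hI, hJ]
        exact ⟨Set.Ioo_subset_Ioo_right hm.2.le, fun hc => lt_irrefl p (hc hm).2⟩
    all_goals
      intro k b c hb hc
      by_cases hk' : k + 1 < s.length
      · grind
      · by_cases hk2 : k + 1 = s.length
        · obtain rfl : k = s.length - 1 := by omega
          grind
        · grind

/-- If the upper end of the last interval is not `|u|+1`, it is the value of the prefix that
precedes the last `Y`-letter. -/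
theorem exists_last_Y (h : CondensedAt u s i j p) (hj : j ≠ u.length + 1) :
    ∃ (s₀ : List (RLetter A)) (a : A) (bs : List A) (pa : ℕ), s₀ ≠ [] ∧
      s = s₀ ++ .Y a :: bs.map .X ∧ evalR u s₀ = some j ∧
      evalR u (s₀ ++ [.Y a]) = some pa ∧ pa ≤ p := by
  induction h with
  | startX _ => exact absurd rfl hj
  | startY _ => exact absurd rfl hj
  | @stepX s i j p q a hs h hq ih =>
    obtain ⟨s₀, c, bs, pa, h0, rfl, h1, h2, h3⟩ := ih hj
    exact ⟨s₀, c, bs ++ [a], pa, h0, by simp, h1, h2, h3.trans (nextOcc_eq_some.1 h).1.le⟩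
  | @stepY s i j p q a hs h hq ih =>
    exact ⟨s, a, [], q, hs.ne_nil, by simp, hs.evalR_eq, (hs.stepY h hq).evalR_eq, le_rfl⟩

/-- If the lower end of the last interval is not `0`, it is the value of the prefix that
precedes the last `X`-letter. -/
theorem exists_last_X (h : CondensedAt u s i j p) (hi : i ≠ 0) :
    ∃ (s₀ : List (RLetter A)) (a : A) (bs : List A) (pa : ℕ), s₀ ≠ [] ∧
      s = s₀ ++ .X a :: bs.map .Y ∧ evalR u s₀ = some i ∧
      evalR u (s₀ ++ [.X a]) = some pa ∧ p ≤ pa := by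
  induction h with
  | startX _ => exact absurd rfl hi
  | startY _ => exact absurd rfl hi
  | @stepX s i j p q a hs h hq ih =>
    exact ⟨s, a, [], q, hs.ne_nil, by simp, hs.evalR_eq, (hs.stepX h hq).evalR_eq, le_rfl⟩
  | @stepY s i j p q a hs h hq ih =>
    obtain ⟨s₀, c, bs, pa, h0, rfl, h1, h2, h3⟩ := ih hi
    exact ⟨s₀, c, bs ++ [a], pa, h0, by simp, h1, h2, (prevOcc_eq_some.1 h).2.1.le.trans h3⟩

end CondensedAt

theorem Ioo_bounds_of_subset {i j i' j' p : ℕ} (hp : p ∈ Set.Ioo i' j')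
    (h : Set.Ioo i' j' ⊆ Set.Ioo i j) : i ≤ i' ∧ j' ≤ j := by
  have h1 := h hp
  simp only [Set.mem_Ioo] at hp h1
  constructor
  · by_contra hc
    have := (h (show i ∈ Set.Ioo i' j' from ⟨by omega, by omega⟩)).1
    omega
  · by_contra hc
    have := (h (show j ∈ Set.Ioo i' j' from ⟨by omega, by omega⟩)).2
    omega

theorem Condensed.exists_condensedAt {s : List (RLetter A)} (h : Condensed u s) :
    ∃ i j p, CondensedAt u s i j p := by
  obtain ⟨p, i, j, hp, hi0, hj0, hsub, hmem, hXX, hYY, hXY, hYX⟩ := h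
  have hs : s ≠ [] := by rintro rfl; simp [evalR] at hp
  have hl := List.length_pos_iff.2 hs
  have hall : ∀ d h, h + d + 1 = s.length → p ∈ Set.Ioo (i h) (j h) := by
    intro d
    induction d with
    | zero => intro h hh; rwa [show h = s.length - 1 by omega]
    | succ d ih => intro h hh; exact (hsub h (by omega)).1 (ih (h + 1) (by omega))
  have hpref : ∀ h, h < s.length → ∃ q, evalR u (s.take (h + 1)) = some q := fun h hh =>
    evalR_prefix_defined (by simp [hs]) (List.take_prefix _ _) hp
  have hboundX : ∀ h a q, s[h]? = some (.X a) → nextOcc u a (i h) = some q →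
      evalR u (s.take (h + 1)) = some q → q < j h := by
    intro h a q ha hq hev
    have hh : h < s.length := by grind
    by_cases hlast : h + 1 < s.length
    · have hne := hall (s.length - (h + 2)) (h + 1) (by omega)
      have hb := Ioo_bounds_of_subset hne (hsub h hlast).1
      have hss := (hsub h hlast).ne
      obtain ⟨w, hw⟩ : ∃ w, s[h + 1]? = some w := ⟨_, List.getElem?_eq_getElem hlast⟩
      simp only [Set.mem_Ioo] at hne
      cases w with
      | X b => have := hXX h a b ha hw; grind
      | Y b =>
        have hr := hXY h a b ha hw
        obtain rfl : q = j (h + 1) := by grind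
        exact lt_of_le_of_ne hb.2 fun hc => hss (by rw [hc, hr.1])
    · rw [List.take_of_length_le (by omega), hp] at hev
      have := hall 0 h (by omega)
      grind
  have hboundY : ∀ h a q, s[h]? = some (.Y a) → prevOcc u a (j h) = some q →
      evalR u (s.take (h + 1)) = some q → i h < q := by
    intro h a q ha hq hev
    have hh : h < s.length := by grind
    by_cases hlast : h + 1 < s.length
    · have hne := hall (s.length - (h + 2)) (h + 1) (by omega)
      have hb := Ioo_bounds_of_subset hne (hsub h hlast).1
      have hss := (hsub h hlast).ne
      obtain ⟨w, hw⟩ : ∃ w, s[h + 1]? = some w := ⟨_, List.getElem?_eq_getElem hlast⟩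
      simp only [Set.mem_Ioo] at hne
      cases w with
      | Y b => have := hYY h a b ha hw; grind
      | X b =>
        have hr := hYX h a b ha hw
        obtain rfl : q = i (h + 1) := by grind
        exact lt_of_le_of_ne hb.1 fun hc => hss (by rw [hc, hr.2])
    · rw [List.take_of_length_le (by omega), hp] at hev
      have := hall 0 h (by omega)
      grind
  have key : ∀ h, h < s.length → ∃ q, CondensedAt u (s.take (h + 1)) (i h) (j h) q := by
    intro h
    induction h with
    | zero =>
      intro hh
      obtain ⟨q, hq⟩ := hpref 0 hh
      obtain ⟨z, t, rfl⟩ := List.exists_cons_of_ne_nil hs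
      rw [hi0, hj0]
      refine ⟨q, ?_⟩
      cases z with
      | X a => exact .startX (by simpa [evalR_singleton, stepR, startPos] using hq)
      | Y a => exact .startY (by simpa [evalR_singleton, stepR, startPos] using hq)
    | succ h ih =>
      intro hh
      obtain ⟨q, hq⟩ := ih (by omega)
      obtain ⟨q', hq'⟩ := hpref (h + 1) hh
      obtain ⟨y, hy⟩ : ∃ y, s[h]? = some y := ⟨_, List.getElem?_eq_getElem (by omega)⟩
      obtain ⟨z, hz⟩ : ∃ z, s[h + 1]? = some z := ⟨_, List.getElem?_eq_getElem hh⟩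
      have hlast : (s.take (h + 1)).getLast? = some y := by
        rw [List.getLast?_take]; simp [hy]
      have htake : s.take (h + 1 + 1) = s.take (h + 1) ++ [z] := by
        rw [List.take_add_one, hz]; rfl
      have hev : stepR u z q = some q' := by
        rw [htake, evalR_concat hq.ne_nil, hq.evalR_eq] at hq'; exact hq'
      refine ⟨q', ?_⟩
      cases z with
      | X b =>
        have hij : i (h + 1) = q ∧ j (h + 1) = j h := by
          cases y with
          | X a => have := hXX h a b hy hz; have := hq.nextOcc_of_last hlast; grind
          | Y a => have := hYX h a b hy hz; have := hq.prevOcc_of_last hlast; grind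
        have := hboundX (h + 1) b q' hz (by rw [hij.1]; exact hev) hq'
        rw [htake, hij.1, hij.2]
        exact hq.stepX hev (hij.2 ▸ this)
      | Y b =>
        have hij : i (h + 1) = i h ∧ j (h + 1) = q := by
          cases y with
          | X a => have := hXY h a b hy hz; have := hq.nextOcc_of_last hlast; grind
          | Y a => have := hYY h a b hy hz; have := hq.prevOcc_of_last hlast; grind
        have := hboundY (h + 1) b q' hz (by rw [hij.2]; exact hev) hq'
        rw [htake, hij.1, hij.2]
        exact hq.stepY hev (hij.1 ▸ this)
  obtain ⟨q, hq⟩ := key (s.length - 1) (by omega)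
  rw [List.take_of_length_le (by omega)] at hq
  exact ⟨_, _, q, hq⟩

/-- The letter of `u` at the position `r(u)` is the one carried by the last letter of `r`. -/
theorem exists_getElem?_evalR {r : List (RLetter A)} {p : ℕ} (h : evalR u r = some p) :
    ∃ c, u[p - 1]? = some c ∧ EndsWith r c := by
  rcases List.eq_nil_or_concat' r with rfl | ⟨t, z, rfl⟩
  · simp [evalR] at h
  have hz : ∃ q, stepR u z q = some p := by
    by_cases ht : t = []
    · subst ht; exact ⟨_, by simpa [evalR_singleton] using h⟩
    · rw [evalR_concat ht] at h
      obtain ⟨q, -, hq⟩ := Option.bind_eq_some_iff.1 h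
      exact ⟨q, hq⟩
  obtain ⟨q, hq⟩ := hz
  cases z with
  | X c => exact ⟨c, (nextOcc_eq_some.1 hq).2.2.1, by simp [EndsWith]⟩
  | Y c => exact ⟨c, (prevOcc_eq_some.1 hq).2.2.1, by simp [EndsWith]⟩

theorem getElem?_evalR_eq_some_iff {r : List (RLetter A)} {p : ℕ} {b : A} (h : evalR u r = some p) :
    u[p - 1]? = some b ↔ EndsWith r b := by
  obtain ⟨c, hc, hr⟩ := exists_getElem?_evalR h
  unfold EndsWith at *
  grind

omit [DecidableEq A] in
theorem numBlocks_cons_pos (z : RLetter A) (t : List (RLetter A)) : 1 ≤ numBlocks (z :: t) := by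
  induction t generalizing z with
  | nil => simp [numBlocks]
  | cons y t ih => cases z <;> cases y <;> simp [numBlocks, ih]

omit [DecidableEq A] in
/-- Dropping a nonempty suffix that contains both directions loses a block. -/
theorem numBlocks_append_lt {s t : List (RLetter A)} (hs : s ≠ []) {a b : A}
    (ha : .X a ∈ t) (hb : .Y b ∈ t) : numBlocks s < numBlocks (s ++ t) := by
  have two : 2 ≤ numBlocks t := by
    clear hs
    induction t generalizing a b with
    | nil => simp at ha
    | cons y t ih =>
      cases t with
      | nil => grind
      | cons z t =>
        have := numBlocks_cons_pos z t
        cases y with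
        | X c =>
          cases z with
          | X d => exact ih (a := d) (b := b) (by simp) (by simpa using hb)
          | Y d => simpa [numBlocks] using this
        | Y c =>
          cases z with
          | X d => simpa [numBlocks] using this
          | Y d => exact ih (a := a) (b := d) (by simpa using ha) (by simp)
  induction s with
  | nil => exact absurd rfl hs
  | cons y s ih =>
    cases s with
    | nil =>
      cases t with
      | nil => simp at ha
      | cons z t => cases y <;> cases z <;> simp_all [numBlocks] <;> omega
    | cons z s => cases y <;> cases z <;> simp_all [numBlocks]

omit [DecidableEq A] in
theorem mem_uR_of_append {Z : Dir} {m n l : ℕ} {s t : List (RLetter A)} (hs : s ≠ []) {a b : A}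
    (ha : .X a ∈ t) (hb : .Y b ∈ t) (hl : l ≤ t.length) (h : s ++ t ∈ uR Z m n) :
    s ∈ uR Z (m - 1) (n - l) := by
  have hlt := numBlocks_append_lt hs ha hb
  obtain ⟨z, s', rfl⟩ := List.exists_cons_of_ne_nil hs
  have hpos := numBlocks_cons_pos z s'
  rcases h with ⟨m', n', hm, hn, h1, h2, c, t', h3, h4⟩ | ⟨m', n', hm, hn, h1, h2, c, t', h3, h4⟩
  · obtain ⟨rfl, -⟩ := List.cons_eq_cons.1 h3
    rw [List.length_append] at h2
    exact .inl ⟨_, _, by omega, by omega, rfl, rfl, z, s', rfl, h4⟩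
  · obtain ⟨rfl, -⟩ := List.cons_eq_cons.1 h3
    rw [List.length_append] at h2
    exact .inr ⟨_, _, by omega, by omega, rfl, rfl, z, s', rfl, h4⟩

/-- If `p < p₀` and the first `b` after `p` is not before `p₀`, then it is `p₀` or the first `b`
after `p₀`. -/
theorem nextOcc_skip {b : A} {p p₀ q : ℕ} (h : nextOcc u b p = some q) (hp : p < p₀)
    (hq : p₀ ≤ q) : (u[p₀ - 1]? = some b → q = p₀) ∧
      (u[p₀ - 1]? ≠ some b → nextOcc u b p₀ = some q) := by
  obtain ⟨h1, h2, h3, h4⟩ := nextOcc_eq_some.1 h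
  refine ⟨fun hb => ?_, fun hb => nextOcc_eq_some.2 ⟨?_, h2, h3, fun x hx => h4 x (by omega)⟩⟩
  · by_contra hne
    exact h4 p₀ hp (by omega) hb
  · exact lt_of_le_of_ne hq fun hc => hb (hc ▸ h3)

/-- If `p₀ < p` and the last `b` before `p` is not after `p₀`, then it is `p₀` or the last `b`
before `p₀`. -/
theorem prevOcc_skip {b : A} {p p₀ q : ℕ} (h : prevOcc u b p = some q) (hp : p₀ < p)
    (hq : q ≤ p₀) : (u[p₀ - 1]? = some b → q = p₀) ∧
      (u[p₀ - 1]? ≠ some b → prevOcc u b p₀ = some q) := by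
  obtain ⟨h1, h2, h3, h4⟩ := prevOcc_eq_some.1 h
  refine ⟨fun hb => ?_, fun hb => prevOcc_eq_some.2 ⟨h1, ?_, h3, fun x hx _ => h4 x hx (by omega)⟩⟩
  · by_contra hne
    exact h4 p₀ (by omega) hp hb
  · exact lt_of_le_of_ne hq fun hc => hb (hc ▸ h3)

end Rankers

theorem statement5 {A : Type*} [DecidableEq A] (Z : Dir) (m n : ℕ) (u : List A)
    (r s : List (RLetter A)) (hr : r ∈ uR Z m n) (hdef : Defined u r)
    (hncond : ¬ Condensed u r) (hs : IsMaxCondensedPrefix u r s) :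
    s ≠ r ∧
    ∃ (l : ℕ) (a b : A) (bs : List A) (s₀ t : List (RLetter A)),
      1 ≤ l ∧ bs.length = l - 1 ∧ s₀ ≠ [] ∧ s₀ ∈ uR Z (m - 1) (n - l) ∧
      ((r = s ++ RLetter.X b :: t ∧
        s = s₀ ++ RLetter.Y a :: bs.map RLetter.X ∧
        ∃ pa ps p₀ pb : ℕ,
          evalR u (s₀ ++ [RLetter.Y a]) = some pa ∧ evalR u s = some ps ∧
          evalR u s₀ = some p₀ ∧ evalR u (s ++ [RLetter.X b]) = some pb ∧
          pa ≤ ps ∧ ps < p₀ ∧ p₀ ≤ pb ∧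
          (EndsWith s₀ b → pb = p₀) ∧
          (¬ EndsWith s₀ b → evalR u (s₀ ++ [RLetter.X b]) = some pb)) ∨
       (r = s ++ RLetter.Y b :: t ∧
        s = s₀ ++ RLetter.X a :: bs.map RLetter.Y ∧
        ∃ pa ps p₀ pb : ℕ,
          evalR u (s₀ ++ [RLetter.X a]) = some pa ∧ evalR u s = some ps ∧
          evalR u s₀ = some p₀ ∧ evalR u (s ++ [RLetter.Y b]) = some pb ∧
          ps ≤ pa ∧ p₀ < ps ∧ pb ≤ p₀ ∧
          (EndsWith s₀ b → pb = p₀) ∧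
          (¬ EndsWith s₀ b → evalR u (s₀ ++ [RLetter.Y b]) = some pb))) := by
  have hne : s ≠ r := fun h => hncond (h ▸ hs.2.1)
  refine ⟨hne, ?_⟩
  obtain ⟨⟨t', rfl⟩, hcond, hmax⟩ := hs
  obtain ⟨i, j, ps, hat⟩ := hcond.exists_condensedAt
  obtain ⟨p, hp⟩ := hdef
  cases t' with
  | nil => exact absurd (List.append_nil s).symm hne
  | cons z t =>
  have hpre : s ++ [z] <+: s ++ z :: t := ⟨t, by simp⟩
  obtain ⟨pb, hpb⟩ := evalR_prefix_defined (by simp) hpre hp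
  have hstep : stepR u z ps = some pb := by
    rw [evalR_concat hat.ne_nil, hat.evalR_eq] at hpb
    exact hpb
  have hnot : ¬ Condensed u (s ++ [z]) := fun h => by
    have := hmax _ hpre h
    simp at this
  have hmem := hat.mem_Ioo
  cases z with
  | X b =>
    have hj : j ≤ pb := by
      by_contra hc
      exact hnot (hat.stepX hstep (not_le.1 hc)).condensed
    have hpl := (nextOcc_eq_some.1 hstep).2.1
    obtain ⟨s₀, a, bs, pa, h0, rfl, h1, h2, h3⟩ := hat.exists_last_Y (by omega)
    have hskip := nextOcc_skip hstep hmem.2 hj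
    rw [Ne, getElem?_evalR_eq_some_iff h1] at hskip
    refine ⟨bs.length + 1, a, b, bs, s₀, t, by omega, by simp, h0, ?_, .inl ⟨rfl, rfl, pa, ps, j,
      pb, h2, hat.evalR_eq, h1, hpb, h3, hmem.2, hj, hskip.1, fun he => ?_⟩⟩
    · rw [List.append_assoc] at hr
      exact mem_uR_of_append h0 (a := b) (b := a) (by simp) (by simp) (by simp) hr
    · rw [evalR_concat h0, h1]
      exact hskip.2 he
  | Y b =>
    have hi : pb ≤ i := by
      by_contra hc
      exact hnot (hat.stepY hstep (not_le.1 hc)).condensed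
    have hpl := (prevOcc_eq_some.1 hstep).1
    obtain ⟨s₀, a, bs, pa, h0, rfl, h1, h2, h3⟩ := hat.exists_last_X (by omega)
    have hskip := prevOcc_skip hstep hmem.1 hi
    rw [Ne, getElem?_evalR_eq_some_iff h1] at hskip
    refine ⟨bs.length + 1, a, b, bs, s₀, t, by omega, by simp, h0, ?_, .inr ⟨rfl, rfl, pa, ps, i,
      pb, h2, hat.evalR_eq, h1, hpb, h3, hmem.1, hi, hskip.1, fun he => ?_⟩⟩
    · rw [List.append_assoc] at hr
      exact mem_uR_of_append h0 (a := a) (b := b) (by simp) (by simp) (by simp) hr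
    · rw [evalR_concat h0, h1]
      exact hskip.2 he
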